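/- Relative entropy of morphisms in FinStat is convex linear. Precisely: let (X, p) be a finite probability space, and for each x ∈ X let U^x, V^x be finite sets, μ^x : U^x → V^x a function, q^x a probability distribution on U^x, and s^x : V^x ⇝ U^x a stochastic section of μ^x. On the disjoint unions ∐_x U^x and ∐_x V^x, form the distribution (x,u) ↦ p_x q^x_u, the function ⊕_x μ^x : (x,u) ↦ (x, μ^x(u)), and the section ⊕_x s^x (equal to s^x on the x-th components and 0 between different components). Then, as an identity in [0,∞], D( ⊕_x p_x q^x, (⊕_x s^x)∘((⊕_x μ^x)∘(⊕_x p_x q^x)) ) = ∑_{x∈X} p_x D( q^x, s^x∘(μ^x∘q^x) ). -/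

import Mathlib

open scoped ENNReal BigOperators

/-- A probability distribution on a finite set `X`. -/
def IsDist {X : Type*} [Fintype X] (p : X → ℝ) : Prop :=
  (∀ x, 0 ≤ p x) ∧ ∑ x, p x = 1

/-- A channel from `X` to `Y`; `f y x` is the probability of output `y` given input `x`. -/
def IsChannel {X Y : Type*} [Fintype Y] (f : Y → X → ℝ) : Prop :=
  (∀ y x, 0 ≤ f y x) ∧ ∀ x, ∑ y, f y x = 1

/-- Composite of channels: `(g ∘ f) z x = ∑ y, g z y * f y x`. -/
noncomputable def chComp {X Y Z : Type*} [Fintype Y]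
    (g : Z → Y → ℝ) (f : Y → X → ℝ) : Z → X → ℝ :=
  fun z x => ∑ y, g z y * f y x

/-- The pure (deterministic) channel associated to a function. -/
def pureCh {X Y : Type*} [DecidableEq Y] (φ : X → Y) : Y → X → ℝ :=
  fun y x => if y = φ x then 1 else 0

/-- Pushforward of a distribution along a channel. -/
noncomputable def push {X Y : Type*} [Fintype X] (f : Y → X → ℝ) (p : X → ℝ) : Y → ℝ :=
  fun y => ∑ x, f y x * p x

/-- The identity channel. -/
def idChan {X : Type*} [DecidableEq X] : X → X → ℝ :=
  fun x x' => if x = x' then 1 else 0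

/-- `s : Y ⇝ X` is a stochastic section of `φ : X → Y` if it is a channel and `φ ∘ s = id_Y`. -/
def IsSection {X Y : Type*} [Fintype X] [Fintype Y] [DecidableEq Y]
    (φ : X → Y) (s : X → Y → ℝ) : Prop :=
  IsChannel s ∧ chComp (pureCh φ) s = idChan

open scoped Classical in
/-- Relative entropy `D(p,q) ∈ [0,∞]`, with the conventions `0·log(0/q) = 0` and
`p·log(p/0) = ∞` for `p ≠ 0`. -/
noncomputable def relEnt {X : Type*} [Fintype X] (p q : X → ℝ) : ℝ≥0∞ :=
  if ∀ x, p x ≠ 0 → q x ≠ 0 then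
    ENNReal.ofReal (∑ x, if p x = 0 then 0 else p x * Real.log (p x / q x))
  else ⊤

/-- The direct sum of a family of channels `f x : A x ⇝ B x` over disjoint unions,
equal to `f x` on the `x`-th components and `0` between different components. -/
def dSum {X : Type*} [DecidableEq X] {A B : X → Type*}
    (f : ∀ x, B x → A x → ℝ) : (Σ x, B x) → (Σ x, A x) → ℝ :=
  fun b a => if h : a.1 = b.1 then f b.1 b.2 (h ▸ a.2) else 0

theorem push_isDist {X Y : Type*} [Fintype X] [Fintype Y] {f : Y → X → ℝ} {p : X → ℝ}
    (hf : IsChannel f) (hp : IsDist p) : IsDist (push f p) := by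
  refine ⟨fun y => Finset.sum_nonneg fun x _ => mul_nonneg (hf.1 y x) (hp.1 x), ?_⟩
  unfold push
  rw [Finset.sum_comm]
  simp_rw [← Finset.sum_mul, hf.2, one_mul]
  exact hp.2

theorem pureCh_isChannel {X Y : Type*} [Fintype Y] [DecidableEq Y] (φ : X → Y) :
    IsChannel (pureCh φ) := by
  refine ⟨fun y x => ?_, fun x => ?_⟩
  · unfold pureCh
    split_ifs <;> norm_num
  · simp [pureCh]

open scoped Classical in
theorem gibbs_nonneg {X : Type*} [Fintype X] {p q : X → ℝ} (hp : IsDist p) (hq : IsDist q)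
    (h : ∀ x, p x ≠ 0 → q x ≠ 0) :
    0 ≤ ∑ x, if p x = 0 then 0 else p x * Real.log (p x / q x) := by
  have h1 : ∑ x, (p x - q x) ≤ ∑ x, if p x = 0 then 0 else p x * Real.log (p x / q x) := by
    refine Finset.sum_le_sum fun x _ => ?_
    split_ifs with h0
    · have := hq.1 x
      linarith
    · have hp0 : 0 < p x := lt_of_le_of_ne (hp.1 x) (Ne.symm h0)
      have hq0 : 0 < q x := lt_of_le_of_ne (hq.1 x) (Ne.symm (h x h0))
      have h2 := Real.one_sub_inv_le_log_of_pos (div_pos hp0 hq0)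
      have h3 := mul_le_mul_of_nonneg_left h2 hp0.le
      have h4 : p x * (1 - (p x / q x)⁻¹) = p x - q x := by
        field_simp
      linarith
  rw [Finset.sum_sub_distrib, hp.2, hq.2] at h1
  linarith

theorem push_pure_sum {X : Type*} [Fintype X] [DecidableEq X]
    {U V : X → Type*} [∀ x, Fintype (U x)] [∀ x, Fintype (V x)]
    [∀ x, DecidableEq (V x)]
    (p : X → ℝ) (μ : ∀ x, U x → V x) (q : ∀ x, U x → ℝ) (v : Σ x, V x) :
    push (pureCh (fun u : Σ x, U x => (⟨u.1, μ u.1 u.2⟩ : Σ x, V x)))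
            (fun u : Σ x, U x => p u.1 * q u.1 u.2) v
      = p v.1 * push (pureCh (μ v.1)) (q v.1) v.2 := by
  obtain ⟨x, v⟩ := v
  unfold push
  rw [Fintype.sum_sigma, Finset.sum_eq_single x]
  · rw [Finset.mul_sum]
    refine Finset.sum_congr rfl fun u _ => ?_
    simp only [pureCh, Sigma.mk.injEq, heq_eq_eq, true_and]
    ring
  · intro y _ hy
    refine Finset.sum_eq_zero fun u _ => ?_
    simp [pureCh, Ne.symm hy]
  · simp

theorem push_dSum {X : Type*} [Fintype X] [DecidableEq X]
    {U V : X → Type*} [∀ x, Fintype (U x)] [∀ x, Fintype (V x)]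
    (p : X → ℝ) (s : ∀ x, U x → V x → ℝ) (w : ∀ x, V x → ℝ) (u : Σ x, U x) :
    push (dSum s) (fun v : Σ x, V x => p v.1 * w v.1 v.2) u
      = p u.1 * push (s u.1) (w u.1) u.2 := by
  obtain ⟨x, u⟩ := u
  unfold push
  rw [Fintype.sum_sigma, Finset.sum_eq_single x]
  · rw [Finset.mul_sum]
    refine Finset.sum_congr rfl fun v _ => ?_
    simp only [dSum, dite_true]
    ring
  · intro y _ hy
    refine Finset.sum_eq_zero fun v _ => ?_
    simp [dSum, hy]
  · simp

theorem relEnt_sum {X : Type*} [Fintype X] {U : X → Type*} [∀ x, Fintype (U x)]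
    (p : X → ℝ) (q r : ∀ x, U x → ℝ) (hp : IsDist p) (hq : ∀ x, IsDist (q x))
    (hr : ∀ x, IsDist (r x)) :
    relEnt (fun u : Σ x, U x => p u.1 * q u.1 u.2) (fun u : Σ x, U x => p u.1 * r u.1 u.2)
      = ∑ x, ENNReal.ofReal (p x) * relEnt (q x) (r x) := by
  classical
  by_cases H : ∀ x, p x ≠ 0 → ∀ u, q x u ≠ 0 → r x u ≠ 0
  · have hc : ∀ u : Σ x, U x, p u.1 * q u.1 u.2 ≠ 0 → p u.1 * r u.1 u.2 ≠ 0 := by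
      intro u hu
      exact mul_ne_zero (left_ne_zero_of_mul hu)
        (H _ (left_ne_zero_of_mul hu) _ (right_ne_zero_of_mul hu))
    unfold relEnt
    rw [if_pos hc, Fintype.sum_sigma]
    have key : ∀ x, (∑ u, if p x * q x u = 0 then 0 else
          p x * q x u * Real.log (p x * q x u / (p x * r x u)))
        = p x * ∑ u, if q x u = 0 then 0 else q x u * Real.log (q x u / r x u) := by
      intro x
      rw [Finset.mul_sum]
      refine Finset.sum_congr rfl fun u _ => ?_
      by_cases h0 : p x = 0
      · simp [h0]
      · by_cases h1 : q x u = 0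
        · simp [h1]
        · rw [if_neg (mul_ne_zero h0 h1), if_neg h1, mul_div_mul_left _ _ h0, mul_assoc]
    simp only [key]
    rw [ENNReal.ofReal_sum_of_nonneg]
    · refine Finset.sum_congr rfl fun x _ => ?_
      by_cases h0 : p x = 0
      · simp [h0]
      · rw [if_pos (H x h0), ENNReal.ofReal_mul (hp.1 x)]
    · intro x _
      by_cases h0 : p x = 0
      · simp [h0]
      · exact mul_nonneg (hp.1 x) (gibbs_nonneg (hq x) (hr x) (H x h0))
  · push Not at H
    obtain ⟨x, hx, u, hu, hru⟩ := H
    have hL : relEnt (fun u : Σ x, U x => p u.1 * q u.1 u.2)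
        (fun u : Σ x, U x => p u.1 * r u.1 u.2) = ⊤ := by
      unfold relEnt
      refine if_neg fun h => h ⟨x, u⟩ (mul_ne_zero hx hu) ?_
      simp [hru]
    have hR : relEnt (q x) (r x) = ⊤ := by
      unfold relEnt
      exact if_neg fun h => h u hu hru
    rw [hL]
    symm
    refine ENNReal.sum_eq_top.2 ⟨x, Finset.mem_univ x, ?_⟩
    rw [hR]
    refine ENNReal.mul_top ?_
    have : 0 < p x := lt_of_le_of_ne (hp.1 x) (Ne.symm hx)
    simpa using this

/-- Relative entropy of morphisms in FinStat is convex linear. -/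
theorem relEnt_FinStat_convex_linear {X : Type*} [Fintype X] [DecidableEq X]
    {U V : X → Type*} [∀ x, Fintype (U x)] [∀ x, Fintype (V x)]
    [∀ x, DecidableEq (V x)]
    (p : X → ℝ) (μ : ∀ x, U x → V x) (q : ∀ x, U x → ℝ) (s : ∀ x, U x → V x → ℝ)
    (hp : IsDist p) (hq : ∀ x, IsDist (q x))
    (hs : ∀ x, IsSection (μ x) (s x)) :
    relEnt (fun u : Σ x, U x => p u.1 * q u.1 u.2)
        (push (dSum s)
          (push (pureCh (fun u : Σ x, U x => (⟨u.1, μ u.1 u.2⟩ : Σ x, V x)))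
            (fun u : Σ x, U x => p u.1 * q u.1 u.2)))
      = ∑ x, ENNReal.ofReal (p x) *
          relEnt (q x) (push (s x) (push (pureCh (μ x)) (q x))) := by
  rw [funext (push_pure_sum p μ q), funext (push_dSum p s fun x => push (pureCh (μ x)) (q x))]
  exact relEnt_sum p q (fun x => push (s x) (push (pureCh (μ x)) (q x))) hp hq fun x =>
    push_isDist (hs x).1 (push_isDist (pureCh_isChannel _) (hq x))
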